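/- arXiv:2509.22332 — 2 statements merged into one kernel-verified Lean document; each statement's English description precedes it below -/
import Mathlib

section
/- Let P be a finite simple graph and let S be an independent set of non-isolated vertices of P such that |S| − |N(S)| ≥ |S'| − |N(S')| (as integers) for every independent set S' of non-isolated vertices of P. Then for every subset X ⊆ N(S), we have |X| ≤ |N(X) ∩ S|. -/
open Finset

/-!
Removing the vertices of `N(X)` from `S` removes `|N(X) ∩ S|` elements of `S`, and it removes all of
`X` from `N(S)`: a vertex of `X` has all its neighbors in `N(X)`. If `|X|` exceeded `|N(X) ∩ S|`,
then `S \ N(X)` would therefore have a larger difference `|S'| − |N(S')|` than `S`.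
-/

section OpenNeighborhood

variable {V : Type*} [DecidableEq V] (G : SimpleGraph V) [G.LocallyFinite] {S X : Finset V}

/-- The open neighborhood `N(S)` of a finite set `S` of vertices. It is a `Finset` because every
vertex has finitely many neighbors, and it may meet `S`. -/
def openNeighborFinset (S : Finset V) : Finset V :=
  S.biUnion fun v => G.neighborFinset v

variable {G}

theorem mem_openNeighborFinset {w : V} : w ∈ openNeighborFinset G S ↔ ∃ v ∈ S, G.Adj v w := by
  simp [openNeighborFinset]

theorem openNeighborFinset_sdiff_subset :
    openNeighborFinset G (S \ openNeighborFinset G X) ⊆ openNeighborFinset G S \ X := by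
  intro w hw
  obtain ⟨v, hv, hvw⟩ := mem_openNeighborFinset.mp hw
  obtain ⟨hvS, hvX⟩ := mem_sdiff.mp hv
  exact mem_sdiff.mpr ⟨mem_openNeighborFinset.mpr ⟨v, hvS, hvw⟩,
    fun hwX => hvX (mem_openNeighborFinset.mpr ⟨w, hwX, hvw.symm⟩)⟩

theorem card_openNeighborFinset_sdiff_add_card_le (hX : X ⊆ openNeighborFinset G S) :
    #(openNeighborFinset G (S \ openNeighborFinset G X)) + #X ≤ #(openNeighborFinset G S) :=
  calc
    #(openNeighborFinset G (S \ openNeighborFinset G X)) + #X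
      ≤ #(openNeighborFinset G S \ X) + #X := by grw [openNeighborFinset_sdiff_subset]
    _ = #(openNeighborFinset G S) := card_sdiff_add_card_eq_card hX

theorem stmt3_general
    (hMax : ∀ S' ⊆ S, (#S' : ℤ) - #(openNeighborFinset G S') ≤ #S - #(openNeighborFinset G S))
    (hX : X ⊆ openNeighborFinset G S) : #X ≤ #(openNeighborFinset G X ∩ S) := by
  have hSdiff := hMax (S \ openNeighborFinset G X) sdiff_subset
  have hNeighbors := card_openNeighborFinset_sdiff_add_card_le hX
  have hSplit := card_sdiff_add_card_inter S (openNeighborFinset G X)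
  rw [inter_comm]
  omega

end OpenNeighborhood

/-- If `S` is an independent set of non-isolated vertices maximizing
`|S| − |N(S)|` among all such sets, then every `X ⊆ N(S)` satisfies `|X| ≤ |N(X) ∩ S|`. -/
theorem stmt3 {V : Type*} [Fintype V] [DecidableEq V]
    (P : SimpleGraph V) [DecidableRel P.Adj] (S : Finset V)
    (hInd : ∀ u ∈ S, ∀ v ∈ S, ¬ P.Adj u v)
    (hNonIso : ∀ v ∈ S, ∃ w, P.Adj v w)
    (hMax : ∀ S' : Finset V, (∀ u ∈ S', ∀ v ∈ S', ¬ P.Adj u v) →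
      (∀ v ∈ S', ∃ w, P.Adj v w) →
      (S'.card : ℤ) - ((S'.biUnion (fun s => P.neighborFinset s)).card : ℤ) ≤
        (S.card : ℤ) - ((S.biUnion (fun s => P.neighborFinset s)).card : ℤ))
    (X : Finset V) (hX : X ⊆ S.biUnion (fun s => P.neighborFinset s)) :
    X.card ≤ ((X.biUnion (fun s => P.neighborFinset s)) ∩ S).card :=
  stmt3_general (fun S' hS' => hMax S' (fun u hu v hv => hInd u (hS' hu) v (hS' hv))
    fun v hv => hNonIso v (hS' hv)) hX
end

section
/- Let P be a finite simple graph and let S be an independent set of non-isolated vertices of P such that |S| − |N(S)| ≥ |S'| − |N(S')| (as integers) for every independent set S' of non-isolated vertices of P. Let R = V(P) \ N[S] and assume that every vertex of R has at least one neighbor in R. Then for every subset X ⊆ R, the number of vertices v ∈ R \ X that have no neighbor in R \ X is at most |X|. -/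
open Finset

/-!
Let `I` be the set of non-isolated vertices of `P` that are isolated in `P[R \ X]`. A vertex of `I`
has no neighbor in `S`, so `S ∪ I` is an independent set of non-isolated vertices, and
`N(I) ⊆ N(S) ∪ X`. Passing from `S` to `S ∪ I` thus gains `|I|` vertices at the cost of at most
`|X|` new neighbors, and maximality of `|S| − |N(S)|` forces `|I| ≤ |X|`.
-/

section Isolated

variable {V : Type*} {G : SimpleGraph V}

/-- The set of isolated vertices of the induced subgraph `G[W]`, as vertices of `G` rather than of
the subtype `W`. -/
def isolatedIn (G : SimpleGraph V) (W : Set V) : Set V :=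
  {v ∈ W | ∀ w ∈ W, ¬ G.Adj v w}

theorem mem_isolatedIn {W : Set V} {v : V} :
    v ∈ isolatedIn G W ↔ v ∈ W ∧ ∀ w ∈ W, ¬ G.Adj v w := Iff.rfl

theorem coe_filter_forall_not_adj (W : Finset V)
    [DecidablePred fun v => ∀ w ∈ W, ¬ G.Adj v w] :
    (W.filter fun v => ∀ w ∈ W, ¬ G.Adj v w : Set V) = isolatedIn G W := by
  ext v
  simp [mem_isolatedIn]

theorem isIndepSet_isolatedIn (W : Set V) : G.IsIndepSet (isolatedIn G W) :=
  fun _ hu _ hv _ => hu.2 _ hv.1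

theorem isolatedIn_subset (W : Set V) : isolatedIn G W ⊆ W :=
  Set.sep_subset _ _

theorem isIndepSet_iff_forall_not_adj {s : Set V} :
    G.IsIndepSet s ↔ ∀ u ∈ s, ∀ v ∈ s, ¬ G.Adj u v :=
  ⟨fun h _ hu _ hv huv => h hu hv huv.ne huv, fun h _ hu _ hv _ => h _ hu _ hv⟩

end Isolated

section Neighborhood

variable {V : Type*} [DecidableEq V] {G : SimpleGraph V} [G.LocallyFinite] {S T : Finset V}

variable (G) in
/-- The open neighborhood `N(S)`, a finite set because `G` is locally finite. -/
def openNbhd (S : Finset V) : Finset V :=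
  S.biUnion fun s => G.neighborFinset s

variable (G) in
/-- The closed neighborhood `N[S] = S ∪ N(S)`. -/
def closedNbhd (S : Finset V) : Finset V :=
  S ∪ openNbhd G S

theorem mem_openNbhd {v : V} : v ∈ openNbhd G S ↔ ∃ s ∈ S, G.Adj s v := by
  simp [openNbhd]

theorem openNbhd_union : openNbhd G (S ∪ T) = openNbhd G S ∪ openNbhd G T :=
  union_biUnion

theorem disjoint_closedNbhd_iff :
    Disjoint T (closedNbhd G S) ↔ Disjoint S T ∧ Disjoint T (openNbhd G S) := by
  rw [closedNbhd, disjoint_union_right, disjoint_comm]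

theorem isIndepSet_union_of_disjoint_openNbhd (hS : G.IsIndepSet S) (hT : G.IsIndepSet T)
    (hST : Disjoint T (openNbhd G S)) : G.IsIndepSet (S ∪ T : Finset V) := by
  have : Std.Symm fun u v => ¬ G.Adj u v := ⟨fun _ _ h h' => h h'.symm⟩
  rw [coe_union, G.isIndepSet_iff, Set.pairwise_union_of_symm]
  exact ⟨hS, hT, fun s hs t ht _ hst => disjoint_left.1 hST ht (mem_openNbhd.2 ⟨s, hs, hst⟩)⟩

theorem openNbhd_sdiff_openNbhd_subset_of_subset_isolatedIn {X : Finset V}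
    (hT : (T : Set V) ⊆ isolatedIn G ((closedNbhd G S : Set V)ᶜ \ X)) :
    openNbhd G T \ openNbhd G S ⊆ X := by
  intro w hw
  obtain ⟨hwT, hwN⟩ := mem_sdiff.1 hw
  obtain ⟨v, hv, hvw⟩ := mem_openNbhd.1 hwT
  obtain ⟨⟨hvR, -⟩, hvIso⟩ := hT hv
  have hwS : w ∉ S := fun hw =>
    hvR (mem_union_right _ (mem_openNbhd.2 ⟨w, hw, hvw.symm⟩))
  by_contra hwX
  exact hvIso w ⟨by simp [closedNbhd, hwS, hwN], hwX⟩ hvw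

end Neighborhood

section Critical

variable {V : Type*} [DecidableEq V] {G : SimpleGraph V} [G.LocallyFinite] {S T : Finset V}

variable (G) in
/-- The surplus `|S| − |N(S)|`, an integer since it may be negative. -/
def surplus (S : Finset V) : ℤ :=
  #S - #(openNbhd G S)

theorem surplus_union_of_disjoint (hST : Disjoint S T) :
    surplus G (S ∪ T) = surplus G S + #T - #(openNbhd G T \ openNbhd G S) := by
  have hN := card_sdiff_add_card (openNbhd G T) (openNbhd G S)
  rw [union_comm] at hN
  rw [surplus, surplus, openNbhd_union, card_union_of_disjoint hST, ← hN]
  push_cast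
  ring

variable (G) in
/-- `S` has the largest surplus among the independent sets of non-isolated vertices of `G`. This is
the notion of a critical independent set, relative to the non-isolated vertices `G.support`. -/
structure IsCriticalIndepSet (S : Finset V) : Prop where
  isIndepSet : G.IsIndepSet S
  subset_support : (S : Set V) ⊆ G.support
  surplus_le : ∀ T : Finset V, G.IsIndepSet T → (T : Set V) ⊆ G.support →
    surplus G T ≤ surplus G S

theorem IsCriticalIndepSet.of_forall_not_adj (hInd : ∀ u ∈ S, ∀ v ∈ S, ¬ G.Adj u v)
    (hsupp : ∀ v ∈ S, ∃ w, G.Adj v w)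
    (hle : ∀ T : Finset V, (∀ u ∈ T, ∀ v ∈ T, ¬ G.Adj u v) → (∀ v ∈ T, ∃ w, G.Adj v w) →
      surplus G T ≤ surplus G S) : IsCriticalIndepSet G S where
  isIndepSet := isIndepSet_iff_forall_not_adj.2 hInd
  subset_support := hsupp
  surplus_le T hT := hle T (isIndepSet_iff_forall_not_adj.1 hT)

theorem IsCriticalIndepSet.card_le_card_openNbhd_sdiff (hS : IsCriticalIndepSet G S)
    (hT : G.IsIndepSet T) (hTsupp : (T : Set V) ⊆ G.support)
    (hST : Disjoint T (closedNbhd G S)) : #T ≤ #(openNbhd G T \ openNbhd G S) := by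
  obtain ⟨hdisj, hnbhd⟩ := disjoint_closedNbhd_iff.1 hST
  have hle := hS.surplus_le (S ∪ T) (isIndepSet_union_of_disjoint_openNbhd hS.isIndepSet hT hnbhd)
    (by simpa using ⟨hS.subset_support, hTsupp⟩)
  rw [surplus_union_of_disjoint hdisj] at hle
  lia

theorem IsCriticalIndepSet.card_le_of_subset_isolatedIn (hS : IsCriticalIndepSet G S)
    {X : Finset V} (hT : (T : Set V) ⊆ isolatedIn G ((closedNbhd G S : Set V)ᶜ \ X))
    (hTsupp : (T : Set V) ⊆ G.support) : #T ≤ #X := by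
  have hST : Disjoint T (closedNbhd G S) := disjoint_left.2 fun _ hv => (hT hv).1.1
  calc
    #T ≤ #(openNbhd G T \ openNbhd G S) :=
      hS.card_le_card_openNbhd_sdiff ((isIndepSet_isolatedIn _).mono hT) hTsupp hST
    _ ≤ #X := card_le_card (openNbhd_sdiff_openNbhd_subset_of_subset_isolatedIn hT)

theorem stmt5_general (hS : IsCriticalIndepSet G S) (X : Finset V) :
    (isolatedIn G ((closedNbhd G S : Set V)ᶜ \ X) ∩ G.support).encard ≤ #X := by
  by_contra! hlt
  obtain ⟨I, hI, hcard⟩ := Set.exists_subset_encard_eq (Order.add_one_le_of_lt hlt)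
  lift I to Finset V using Set.finite_of_encard_eq_coe (k := #X + 1) (by simpa using hcard)
  have hle := hS.card_le_of_subset_isolatedIn (fun _ hv => (hI hv).1) fun _ hv => (hI hv).2
  rw [Set.encard_coe_eq_coe_finsetCard] at hcard
  norm_cast at hcard
  lia

end Critical

/-- With `S` an independent set of non-isolated vertices maximizing
`|S| − |N(S)|`, and `R = V(P) \ N[S]` such that every vertex of `R` has a neighbor
in `R`, for every `X ⊆ R` the number of vertices of `R \ X` with no neighbor in
`R \ X` is at most `|X|`. -/
theorem stmt5 {V : Type*} [Fintype V] [DecidableEq V]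
    (P : SimpleGraph V) [DecidableRel P.Adj] (S : Finset V)
    (hInd : ∀ u ∈ S, ∀ v ∈ S, ¬ P.Adj u v)
    (hNonIso : ∀ v ∈ S, ∃ w, P.Adj v w)
    (hMax : ∀ S' : Finset V, (∀ u ∈ S', ∀ v ∈ S', ¬ P.Adj u v) →
      (∀ v ∈ S', ∃ w, P.Adj v w) →
      (S'.card : ℤ) - ((S'.biUnion (fun s => P.neighborFinset s)).card : ℤ) ≤
        (S.card : ℤ) - ((S.biUnion (fun s => P.neighborFinset s)).card : ℤ))
    (R : Finset V)
    (hR : R = Finset.univ \ (S ∪ S.biUnion (fun s => P.neighborFinset s)))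
    (hRnoIso : ∀ v ∈ R, ∃ w ∈ R, P.Adj v w)
    (X : Finset V) (hX : X ⊆ R) :
    ((R \ X).filter (fun v => ∀ w ∈ R \ X, ¬ P.Adj v w)).card ≤ X.card := by
  have hS : IsCriticalIndepSet P S := .of_forall_not_adj hInd hNonIso hMax
  have hsupp : ((R \ X : Finset V) : Set V) ⊆ P.support := fun v hv =>
    (hRnoIso v (mem_sdiff.1 hv).1).imp fun _ => And.right
  rw [← Nat.cast_le (α := ℕ∞), ← Set.encard_coe_eq_coe_finsetCard, coe_filter_forall_not_adj,
    ← Set.inter_eq_left.2 ((isolatedIn_subset _).trans hsupp), hR]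
  simpa [closedNbhd, openNbhd, Set.compl_eq_univ_sdiff] using stmt5_general hS X
end
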